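/- The subgroup of F_n generated by τ_1,...,τ_{n-1} is isomorphic to the symmetric group S_n, via τ_i ↦ (i, i+1). -/

import Mathlib

set_option maxHeartbeats 1000000

namespace OneTermBracket

/-- Letters (generators) of free braid words on `n` strands:
`zeta i` is a classical crossing, `tau i` a virtual crossing, `1 ≤ i+1 ≤ n-1`. -/
inductive Letter (n : ℕ) where
  | zeta (i : Fin (n-1))
  | tau  (i : Fin (n-1))
deriving DecidableEq

namespace Letter

def idx {n : ℕ} : Letter n → Fin (n-1)
  | zeta i => i
  | tau i => i

def isZeta {n : ℕ} : Letter n → Bool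
  | zeta _ => true
  | tau _ => false

end Letter

def lo {n : ℕ} (i : Fin (n-1)) : Fin n := ⟨i.1, by have := i.2; omega⟩
def hi {n : ℕ} (i : Fin (n-1)) : Fin n := ⟨i.1 + 1, by have := i.2; omega⟩

/-- The transposition `(i, i+1)` of `{1, …, n}`. -/
def sPerm {n : ℕ} (i : Fin (n-1)) : Equiv.Perm (Fin n) := Equiv.swap (lo i) (hi i)

/-- Each letter acts on positions as the transposition `(i, i+1)`. -/
def transOf {n : ℕ} (g : Letter n) : Equiv.Perm (Fin n) := sPerm g.idx

/-- The permutation realized by the prefix of length `j` of a braid word,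
mapping the top label of a strand to its position at level `j`. -/
def prefPerm {n : ℕ} (w : List (Letter n)) (j : ℕ) : Equiv.Perm (Fin n) :=
  (((w.take j).map transOf).reverse).prod

/-- The permutation `P(β)` of a braid word (top endpoint `k` goes to bottom endpoint `P k`). -/
def permOf {n : ℕ} (w : List (Letter n)) : Equiv.Perm (Fin n) :=
  ((w.map transOf).reverse).prod

/-- The unordered pair of (top labels of the) strands crossing at position `j` of `w`. -/
def strandsAt {n : ℕ} (w : List (Letter n)) (j : ℕ) : Option (Sym2 (Fin n)) :=
  (w[j]?).map fun g => s((prefPerm w j)⁻¹ (lo g.idx), (prefPerm w j)⁻¹ (hi g.idx))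

/-- Component-wise parity determined by a partition `{1,…,n} = N₁ ⊔ N₂` (encoded by
`c : Fin n → Bool`): a classical crossing is odd (`1`) iff its two strands lie in
different parts. Non-classical positions get `0`. -/
def cwParity {n : ℕ} (c : Fin n → Bool) (w : List (Letter n)) (j : ℕ) : ZMod 2 :=
  match w[j]? with
  | some (.zeta i) =>
      if c ((prefPerm w j)⁻¹ (lo i)) = c ((prefPerm w j)⁻¹ (hi i)) then 0 else 1
  | _ => 0

/-- The defining relations of `F_n` and `FB_n` which do not involve
`ζ_i² = 1` or the classical third Reidemeister move ("strong" moves). -/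
inductive RelStrong (n : ℕ) : List (Letter n) → List (Letter n) → Prop
  | tt (i : Fin (n-1)) : RelStrong n [.tau i, .tau i] []
  | virt (i : Fin (n-1)) : RelStrong n [.zeta i, .tau i] [.tau i, .zeta i]
  | far_zz (i j : Fin (n-1)) (h : 2 ≤ Nat.dist i j) :
      RelStrong n [.zeta i, .zeta j] [.zeta j, .zeta i]
  | far_zt (i j : Fin (n-1)) (h : 2 ≤ Nat.dist i j) :
      RelStrong n [.zeta i, .tau j] [.tau j, .zeta i]
  | far_tt (i j : Fin (n-1)) (h : 2 ≤ Nat.dist i j) :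
      RelStrong n [.tau i, .tau j] [.tau j, .tau i]
  | r3v (i j : Fin (n-1)) (h : (j:ℕ) = (i:ℕ) + 1) :
      RelStrong n [.tau i, .tau j, .tau i] [.tau j, .tau i, .tau j]
  | semi (i j : Fin (n-1)) (h : (j:ℕ) = (i:ℕ) + 1) :
      RelStrong n [.tau i, .tau j, .zeta i] [.zeta j, .tau i, .tau j]

/-- The defining relations of `F_n`. -/
inductive RelF (n : ℕ) : List (Letter n) → List (Letter n) → Prop
  | strong {r1 r2} : RelStrong n r1 r2 → RelF n r1 r2
  | zz (i : Fin (n-1)) : RelF n [.zeta i, .zeta i] []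

/-- The defining relations of the free braid group `FB_n`. -/
inductive RelFB (n : ℕ) : List (Letter n) → List (Letter n) → Prop
  | ofF {r1 r2} : RelF n r1 r2 → RelFB n r1 r2
  | r3c (i j : Fin (n-1)) (h : (j:ℕ) = (i:ℕ) + 1) :
      RelFB n [.zeta i, .zeta j, .zeta i] [.zeta j, .zeta i, .zeta j]

/-- One application of a relation from `R` inside a word. -/
def StepOf {n : ℕ} (R : List (Letter n) → List (Letter n) → Prop)
    (w1 w2 : List (Letter n)) : Prop :=
  ∃ A B r1 r2, R r1 r2 ∧ w1 = A ++ r1 ++ B ∧ w2 = A ++ r2 ++ B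

/-- Strong equivalence: all moves of `F_n` except `ζ_i² = 1`. -/
def StrongEq {n : ℕ} (w1 w2 : List (Letter n)) : Prop :=
  Relation.EqvGen (StepOf (RelStrong n)) w1 w2

/-- Equivalence of braid words as elements of `F_n`. -/
def EqF {n : ℕ} (w1 w2 : List (Letter n)) : Prop :=
  Relation.EqvGen (StepOf (RelF n)) w1 w2

/-- Equivalence of braid words as elements of the free braid group `FB_n`. -/
def EqFB {n : ℕ} (w1 w2 : List (Letter n)) : Prop :=
  Relation.EqvGen (StepOf (RelFB n)) w1 w2

/-- The parity axioms, for a parity `P` defined on the class `C` of braid words.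
`P w j` is the parity of the crossing at position `j` of `w` (only classical
positions matter). -/
structure IsParity {n : ℕ} (C : List (Letter n) → Prop)
    (P : List (Letter n) → ℕ → ZMod 2) : Prop where
  /-- Crossings not taking part in a relation keep their parity (part before). -/
  untouched_left : ∀ A B r1 r2, RelFB n r1 r2 →
    C (A ++ r1 ++ B) → C (A ++ r2 ++ B) → ∀ j < A.length,
    P (A ++ r1 ++ B) j = P (A ++ r2 ++ B) j
  /-- Crossings not taking part in a relation keep their parity (part after). -/
  untouched_right : ∀ A B r1 r2, RelFB n r1 r2 →
    C (A ++ r1 ++ B) → C (A ++ r2 ++ B) → ∀ j < B.length,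
    P (A ++ r1 ++ B) (A.length + r1.length + j) = P (A ++ r2 ++ B) (A.length + r2.length + j)
  /-- In commutation-type relations (far commutativity, virtualization), the two
  letters keep their parities. -/
  comm : ∀ A B x y, RelFB n [x, y] [y, x] →
    C (A ++ [x, y] ++ B) → C (A ++ [y, x] ++ B) →
    P (A ++ [x, y] ++ B) A.length = P (A ++ [y, x] ++ B) (A.length + 1) ∧
    P (A ++ [x, y] ++ B) (A.length + 1) = P (A ++ [y, x] ++ B) A.length
  /-- In a classical second Reidemeister move both crossings have the same parity. -/
  r2c : ∀ A B (i : Fin (n-1)),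
    C (A ++ [.zeta i, .zeta i] ++ B) → C (A ++ B) →
    P (A ++ [.zeta i, .zeta i] ++ B) A.length
      = P (A ++ [.zeta i, .zeta i] ++ B) (A.length + 1)
  /-- In a semivirtual move, the classical crossing keeps its parity. -/
  semiv : ∀ A B (i j : Fin (n-1)), (j:ℕ) = (i:ℕ) + 1 →
    C (A ++ [.tau i, .tau j, .zeta i] ++ B) →
    C (A ++ [.zeta j, .tau i, .tau j] ++ B) →
    P (A ++ [.tau i, .tau j, .zeta i] ++ B) (A.length + 2)
      = P (A ++ [.zeta j, .tau i, .tau j] ++ B) A.length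
  /-- In a classical third Reidemeister move the number of odd crossings is even. -/
  r3_even : ∀ A B (i j : Fin (n-1)), (j:ℕ) = (i:ℕ) + 1 →
    C (A ++ [.zeta i, .zeta j, .zeta i] ++ B) →
    C (A ++ [.zeta j, .zeta i, .zeta j] ++ B) →
    P (A ++ [.zeta i, .zeta j, .zeta i] ++ B) A.length
      + P (A ++ [.zeta i, .zeta j, .zeta i] ++ B) (A.length + 1)
      + P (A ++ [.zeta i, .zeta j, .zeta i] ++ B) (A.length + 2) = 0
  /-- In a classical third Reidemeister move, upper/middle/lower crossings on the
  left correspond to lower/middle/upper crossings on the right with equal parities. -/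
  r3_corr : ∀ A B (i j : Fin (n-1)), (j:ℕ) = (i:ℕ) + 1 →
    C (A ++ [.zeta i, .zeta j, .zeta i] ++ B) →
    C (A ++ [.zeta j, .zeta i, .zeta j] ++ B) →
    P (A ++ [.zeta i, .zeta j, .zeta i] ++ B) A.length
      = P (A ++ [.zeta j, .zeta i, .zeta j] ++ B) (A.length + 2) ∧
    P (A ++ [.zeta i, .zeta j, .zeta i] ++ B) (A.length + 1)
      = P (A ++ [.zeta j, .zeta i, .zeta j] ++ B) (A.length + 1) ∧
    P (A ++ [.zeta i, .zeta j, .zeta i] ++ B) (A.length + 2)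
      = P (A ++ [.zeta j, .zeta i, .zeta j] ++ B) A.length

/-- Delete from `w` all classical letters whose parity (given by `par`) is even. -/
def deleteEven {n : ℕ} (w : List (Letter n)) (par : ℕ → ZMod 2) : List (Letter n) :=
  (List.range w.length).filterMap fun j =>
    (w[j]?).bind fun g =>
      match g with
      | .zeta i => if par j = 0 then none else some (.zeta i)
      | .tau i => some (.tau i)

/-- The one-term parity bracket: delete all even classical crossings. -/
def bracket {n : ℕ} (P : List (Letter n) → ℕ → ZMod 2) (w : List (Letter n)) :
    List (Letter n) :=
  deleteEven w (P w)

/-- Positions of classical crossings of a word. -/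
def ZetaPos {n : ℕ} (w : List (Letter n)) : Set ℕ :=
  {j | ∃ i, w[j]? = some (Letter.zeta i)}

/-- The classical crossings at positions `j1 < j2` form a bigon: they lie on the same
pair of strands, and no classical crossing between them lies on either of those strands. -/
def IsBigon {n : ℕ} (w : List (Letter n)) (j1 j2 : ℕ) : Prop :=
  j1 < j2 ∧ j1 ∈ ZetaPos w ∧ j2 ∈ ZetaPos w ∧
  strandsAt w j1 = strandsAt w j2 ∧
  ∀ k, j1 < k → k < j2 → k ∈ ZetaPos w →
    ∀ e e', strandsAt w j1 = some e → strandsAt w k = some e' → ∀ a ∈ e, a ∉ e'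

/-- Delete the letters at two given positions. -/
def delete2 {n : ℕ} (w : List (Letter n)) (j1 j2 : ℕ) : List (Letter n) :=
  (w.eraseIdx (max j1 j2)).eraseIdx (min j1 j2)

/-- One bigon reduction. -/
def BigonStep {n : ℕ} (w w' : List (Letter n)) : Prop :=
  ∃ j1 j2, IsBigon w j1 j2 ∧ w' = delete2 w j1 j2

/-- A word is irreducible if it admits no bigon reduction. -/
def Irreducible {n : ℕ} (w : List (Letter n)) : Prop := ¬ ∃ j1 j2, IsBigon w j1 j2

/-- Number of classical letters of a word. -/
def countZeta {n : ℕ} (w : List (Letter n)) : ℕ := (w.filter Letter.isZeta).length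

/-- `φ` is an isomorphism of the decorated graphs `Γ(w1) ≅ Γ(w2)`, encoded
combinatorially: a bijection of classical crossings preserving the pair of strands
through each crossing, the order of crossings along each strand, and the endpoint
structure (the permutation). -/
structure IsGammaIso {n : ℕ} (w1 w2 : List (Letter n)) (φ : ℕ → ℕ) : Prop where
  maps : ∀ j ∈ ZetaPos w1, φ j ∈ ZetaPos w2
  inj : ∀ j ∈ ZetaPos w1, ∀ j' ∈ ZetaPos w1, φ j = φ j' → j = j'
  surj : ∀ k ∈ ZetaPos w2, ∃ j ∈ ZetaPos w1, φ j = k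
  strands : ∀ j ∈ ZetaPos w1, strandsAt w2 (φ j) = strandsAt w1 j
  order : ∀ j ∈ ZetaPos w1, ∀ j' ∈ ZetaPos w1, j < j' →
    (∃ e e' a, strandsAt w1 j = some e ∧ strandsAt w1 j' = some e' ∧ a ∈ e ∧ a ∈ e') →
    φ j < φ j'
  perm : permOf w1 = permOf w2

/-! ### The groups `F_n` and `FB_n` as presented groups -/

/-- Generators: `Sum.inl i` is the classical generator `ζ_i`,
`Sum.inr i` is the virtual generator `τ_i`. -/
abbrev GGen (n : ℕ) := Fin (n-1) ⊕ Fin (n-1)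

def zg {n : ℕ} (i : Fin (n-1)) : FreeGroup (GGen n) := FreeGroup.of (Sum.inl i)
def tg {n : ℕ} (i : Fin (n-1)) : FreeGroup (GGen n) := FreeGroup.of (Sum.inr i)

/-- The relators of `F_n`. -/
def FRels (n : ℕ) : Set (FreeGroup (GGen n)) :=
  (⋃ i, {zg i * zg i}) ∪ (⋃ i, {tg i * tg i}) ∪
  (⋃ i, {zg i * tg i * (tg i * zg i)⁻¹}) ∪
  (⋃ (i : Fin (n-1)) (j : Fin (n-1)) (_ : 2 ≤ Nat.dist i j),
    {zg i * zg j * (zg j * zg i)⁻¹, zg i * tg j * (tg j * zg i)⁻¹,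
     tg i * tg j * (tg j * tg i)⁻¹}) ∪
  (⋃ (i : Fin (n-1)) (j : Fin (n-1)) (_ : (j:ℕ) = (i:ℕ) + 1),
    {tg i * tg j * tg i * (tg j * tg i * tg j)⁻¹,
     tg i * tg j * zg i * (zg j * tg i * tg j)⁻¹})

/-- The relators of `FB_n`: those of `F_n` together with the classical third
Reidemeister relation. -/
def FBRels (n : ℕ) : Set (FreeGroup (GGen n)) :=
  FRels n ∪
  (⋃ (i : Fin (n-1)) (j : Fin (n-1)) (_ : (j:ℕ) = (i:ℕ) + 1),
    {zg i * zg j * zg i * (zg j * zg i * zg j)⁻¹})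

/-- The group `F_n`. -/
abbrev FGrp (n : ℕ) := PresentedGroup (FRels n)

/-- The free braid group `FB_n`. -/
abbrev FBGrp (n : ℕ) := PresentedGroup (FBRels n)

def zF {n : ℕ} (i : Fin (n-1)) : FGrp n := PresentedGroup.of (Sum.inl i)
def tF {n : ℕ} (i : Fin (n-1)) : FGrp n := PresentedGroup.of (Sum.inr i)

/-- Evaluation of a braid word in `F_n`. -/
def evalF {n : ℕ} (w : List (Letter n)) : FGrp n :=
  (w.map fun g => match g with
    | Letter.zeta i => zF i
    | Letter.tau i => tF i).prod

/-- For each unordered pair of strands, the mod-2 number of classical letters of `w`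
at which these two strands cross (strand labels traced from the top). -/
def crossPar {n : ℕ} : List (Letter n) → Sym2 (Fin n) → ZMod 2
  | [], _ => 0
  | g :: rest, e =>
    (match g with
     | Letter.zeta i => if e = s(lo i, hi i) then (1 : ZMod 2) else 0
     | Letter.tau _ => 0) + crossPar rest (e.map (transOf g))

/-! ### Chord diagrams and the Gaussian parity -/

/-- The setoid on strands given by `SameCycle`; its classes are the orbits of `σ`,
i.e. the components of the closure. -/
def sameCycleSetoid {n : ℕ} (σ : Equiv.Perm (Fin n)) : Setoid (Fin n) :=
  ⟨σ.SameCycle, ⟨Equiv.Perm.SameCycle.refl σ, Equiv.Perm.SameCycle.symm,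
    Equiv.Perm.SameCycle.trans⟩⟩

/-- The rank of a strand in the single cycle of `σ` starting from strand `0`. -/
noncomputable def rankIn {n : ℕ} [NeZero n] (σ : Equiv.Perm (Fin n)) (a : Fin n) : ℕ :=
  ((Function.invFun (fun k : Fin n => (σ ^ (k : ℕ)) 0) a : Fin n) : ℕ)

/-- Coordinates on the core circle of the two endpoints of the chord of the classical
crossing at position `j` (the circle traverses the strands in the cyclic order of `σ`). -/
noncomputable def chordEnds {n : ℕ} [NeZero n] (w : List (Letter n))
    (σ : Equiv.Perm (Fin n)) (j : ℕ) : ℕ × ℕ :=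
  match w[j]? with
  | some (Letter.zeta i) =>
      (rankIn σ ((prefPerm w j)⁻¹ (lo i)) * w.length + j,
       rankIn σ ((prefPerm w j)⁻¹ (hi i)) * w.length + j)
  | _ => (0, 0)

/-- Two chords are linked iff the endpoints of one separate the endpoints of the
other on the core circle. -/
def LinkedChords {n : ℕ} [NeZero n] (w : List (Letter n)) (σ : Equiv.Perm (Fin n))
    (j k : ℕ) : Prop :=
  Xor' (min (chordEnds w σ j).1 (chordEnds w σ j).2 < (chordEnds w σ k).1 ∧
        (chordEnds w σ k).1 < max (chordEnds w σ j).1 (chordEnds w σ j).2)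
       (min (chordEnds w σ j).1 (chordEnds w σ j).2 < (chordEnds w σ k).2 ∧
        (chordEnds w σ k).2 < max (chordEnds w σ j).1 (chordEnds w σ j).2)

/-- The Gaussian parity of the classical crossing at position `j`: the mod-2 number
of chords linked with its chord. Even (`0`) iff linked with evenly many chords. -/
noncomputable def gaussParity {n : ℕ} [NeZero n] (w : List (Letter n))
    (σ : Equiv.Perm (Fin n)) (j : ℕ) : ZMod 2 :=
  (Nat.card {k : ℕ // k < w.length ∧ k ∈ ZetaPos w ∧ k ≠ j ∧ LinkedChords w σ j k} : ZMod 2)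


section CoxeterA

variable {G : Type*} [Group G]

/-- descending product `t_{m-1} ⋯ t_k` -/
def cox (t : ℕ → G) : ℕ → ℕ → G
  | 0, _ => 1
  | m + 1, k => if k ≤ m then t m * cox t m k else 1

theorem cox_ge (t : ℕ → G) (m k : ℕ) (h : m ≤ k) : cox t m k = 1 := by
  cases m with
  | zero => rfl
  | succ m => rw [cox, if_neg (by omega)]

theorem cox_step (t : ℕ → G) (m k : ℕ) (h : k ≤ m) : cox t (m+1) k = t m * cox t m k := by
  rw [cox, if_pos h]

theorem cox_right (t : ℕ → G) (m k : ℕ) (h : k < m) :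
    cox t m k = cox t m (k+1) * t k := by
  induction m with
  | zero => omega
  | succ m ih =>
    rw [cox_step t m k (by omega)]
    rcases Nat.lt_or_ge k m with h1 | h1
    · rw [cox_step t m (k+1) (by omega), ih h1, mul_assoc]
    · obtain rfl : k = m := by omega
      rw [cox_ge t k k le_rfl, cox_ge t (k+1) (k+1) le_rfl]; simp

/-- the type A relations -/
structure CoxRel (t : ℕ → G) (n : ℕ) : Prop where
  sq : ∀ i, i + 1 < n → t i * t i = 1
  far : ∀ i j, i + 1 < j → j + 1 < n → t i * t j = t j * t i
  br : ∀ i, i + 2 < n → t i * t (i+1) * t i = t (i+1) * t i * t (i+1)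

variable {t : ℕ → G} {n : ℕ}

theorem cox_comm_hi (H : CoxRel t n) (m k a : ℕ) (h : m < a) (ha : a + 1 < n) :
    cox t m k * t a = t a * cox t m k := by
  induction m with
  | zero => simp [cox]
  | succ m ih =>
    rcases Nat.lt_or_ge m k with h1 | h1
    · rw [cox_ge t _ _ (by omega)]; simp
    · rw [cox_step t m k h1, mul_assoc, ih (by omega), ← mul_assoc, H.far m a (by omega) ha,
        mul_assoc]

theorem cox_comm_lo (H : CoxRel t n) (m k a : ℕ) (h : a + 1 < k) (hm : m < n) :
    cox t m k * t a = t a * cox t m k := by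
  induction m with
  | zero => simp [cox]
  | succ m ih =>
    rcases Nat.lt_or_ge m k with h1 | h1
    · rw [cox_ge t _ _ (by omega)]; simp
    · rw [cox_step t m k h1, mul_assoc, ih (by omega), ← mul_assoc,
        ← H.far a m (by omega) (by omega), mul_assoc]

theorem cox_shift (H : CoxRel t n) (m k j : ℕ) (hk : k ≤ j) (hj : j + 1 < m) (hm : m < n) :
    cox t m k * t (j+1) = t j * cox t m k := by
  induction m with
  | zero => omega
  | succ m ih =>
    rw [cox_step t m k (by omega)]
    rcases Nat.lt_or_ge (j+1) m with h1 | h1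
    · rw [mul_assoc, ih h1 (by omega), ← mul_assoc, ← H.far j m h1 (by omega), mul_assoc]
    · obtain rfl : m = j + 1 := by omega
      rw [cox_step t j k hk]
      have := cox_comm_hi H j k (j+1) (by omega) (by omega)
      have hb := H.br j (by omega)
      calc t (j+1) * (t j * cox t j k) * t (j+1)
          = t (j+1) * t j * (cox t j k * t (j+1)) := by group
        _ = (t (j+1) * t j * t (j+1)) * cox t j k := by rw [this]; group
        _ = t j * (t (j+1) * (t j * cox t j k)) := by rw [← hb]; group

/-- the parabolic subgroup generated by `t_0, …, t_{m-1}` -/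
def coxH (t : ℕ → G) (m : ℕ) : Subgroup G := Subgroup.closure {g | ∃ i < m, g = t i}

theorem mem_coxH (m i : ℕ) (h : i < m) : t i ∈ coxH t m :=
  Subgroup.subset_closure ⟨i, h, rfl⟩

theorem cox_coset (H : CoxRel t n) (m : ℕ) (hm : m + 1 < n) (w : G) (hw : w ∈ coxH t (m+1)) :
    ∃ h ∈ coxH t m, ∃ k ≤ m + 1, w = h * cox t (m+1) k := by
  have key : ∀ x : G, (∃ h ∈ coxH t m, ∃ k ≤ m + 1, x = h * cox t (m+1) k) →
      ∀ i < m + 1, ∃ h ∈ coxH t m, ∃ k ≤ m + 1, x * t i = h * cox t (m+1) k := by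
    rintro x ⟨h, hh, k, hk, rfl⟩ i hi
    rcases lt_trichotomy i k with h1 | rfl | h1
    · rcases Nat.lt_or_ge (i+1) k with h2 | h2
      · refine ⟨h * t i, mul_mem hh (mem_coxH m i (by omega)), k, hk, ?_⟩
        rw [mul_assoc, cox_comm_lo H _ _ _ h2 hm, mul_assoc]
      · obtain rfl : k = i + 1 := by omega
        exact ⟨h, hh, i, by omega, by rw [mul_assoc, ← cox_right t _ _ hi]⟩
    · refine ⟨h, hh, i+1, by omega, ?_⟩
      rw [cox_right t _ _ hi, mul_assoc, mul_assoc, H.sq i (by omega), mul_one]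
    · obtain ⟨j, rfl⟩ : ∃ j, i = j + 1 := ⟨i - 1, by omega⟩
      refine ⟨h * t j, mul_mem hh (mem_coxH m j (by omega)), k, hk, ?_⟩
      rw [mul_assoc, cox_shift H _ _ _ (by omega) hi hm, mul_assoc]
  unfold coxH at hw
  induction hw using Subgroup.closure_induction_right with
  | one => exact ⟨1, one_mem _, m+1, le_rfl, by rw [cox_ge t _ _ le_rfl, mul_one]⟩
  | mul_right x hx y hy ih =>
    obtain ⟨i, hi, rfl⟩ := hy
    exact key x ih i hi
  | mul_inv_cancel x hx y hy ih =>
    obtain ⟨i, hi, rfl⟩ := hy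
    rw [inv_eq_of_mul_eq_one_left (H.sq i (by omega))]
    exact key x ih i hi

theorem cox_inj (H : CoxRel t n) (φ : G →* Equiv.Perm (Fin n))
    (hφ : ∀ i (h : i + 1 < n), φ (t i) = Equiv.swap ⟨i, by omega⟩ ⟨i+1, h⟩)
    (m : ℕ) (hm : m < n) (w : G) (hw : w ∈ coxH t m) (h1 : φ w = 1) : w = 1 := by
  have A : ∀ m < n, ∀ g ∈ coxH t m, ∀ x : Fin n, m < x.1 → φ g x = x := by
    intro m hm g hg x hx
    have : coxH t m ≤ (MulAction.stabilizer (Equiv.Perm (Fin n)) x).comap φ := by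
      refine (Subgroup.closure_le _).2 ?_
      rintro _ ⟨i, hi, rfl⟩
      simp only [Subgroup.coe_comap, Set.mem_preimage, SetLike.mem_coe,
        MulAction.mem_stabilizer_iff, Equiv.Perm.smul_def]
      rw [hφ i (by omega)]
      apply Equiv.swap_apply_of_ne_of_ne <;> (intro h; have h2 := congrArg Fin.val h; simp at h2; omega)
    simpa using this hg
  have B : ∀ m (hm : m < n) k (hk : k ≤ m), φ (cox t m k) ⟨k, by omega⟩ = ⟨m, hm⟩ := by
    intro m
    induction m with
    | zero => intro hm k hk; obtain rfl : k = 0 := by omega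
              simp [cox]
    | succ m ih =>
      intro hm k hk
      rcases Nat.lt_or_ge m k with h1 | h1
      · obtain rfl : k = m + 1 := by omega
        rw [cox_ge t _ _ le_rfl]; simp
      · rw [cox_step t m k h1, map_mul, Equiv.Perm.mul_apply, ih (by omega) k h1, hφ m hm,
          Equiv.swap_apply_left]
  induction m generalizing w with
  | zero =>
    have : coxH t 0 = ⊥ := by simp [coxH]
    rw [this] at hw
    exact hw
  | succ m ih =>
    obtain ⟨h, hh, k, hk, rfl⟩ := cox_coset H m hm w hw
    have e : φ (h * cox t (m+1) k) ⟨k, by omega⟩ = ⟨k, by omega⟩ := by rw [h1]; rfl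
    rw [map_mul, Equiv.Perm.mul_apply, B (m+1) hm k hk, A m (by omega) h hh _ (by simp)] at e
    have e' : m + 1 = k := by simpa using e
    subst e'
    rw [cox_ge t _ _ le_rfl, mul_one] at h1 ⊢
    exact ih (by omega) h hh h1 B

end CoxeterA

/-- images of generators under the retraction -/
def retGen (n : ℕ) : GGen n → Equiv.Perm (Fin n)
  | Sum.inl _ => 1
  | Sum.inr i => sPerm i

theorem sPerm_far {n : ℕ} (i j : Fin (n-1)) (h : 2 ≤ Nat.dist i j) :
    sPerm i * sPerm j = sPerm j * sPerm i := by
  have h' : (i:ℕ) + 2 ≤ j ∨ (j:ℕ) + 2 ≤ i := by unfold Nat.dist at h; omega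
  apply Equiv.Perm.Disjoint.commute
  intro x
  unfold sPerm
  by_cases hx : x = lo i ∨ x = hi i
  · right
    apply Equiv.swap_apply_of_ne_of_ne <;>
    · intro he; subst he; simp only [lo, hi, Fin.ext_iff] at hx; omega
  · left
    push Not at hx
    exact Equiv.swap_apply_of_ne_of_ne hx.1 hx.2

theorem sPerm_braid {n : ℕ} (i j : Fin (n-1)) (h : (j:ℕ) = (i:ℕ) + 1) :
    sPerm i * sPerm j * sPerm i = sPerm j * sPerm i * sPerm j := by
  have h1 : hi i = lo j := by simp [hi, lo, h]
  have h2 : lo i ≠ lo j := by simp [lo, Fin.ext_iff, h]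
  have h3 : lo i ≠ hi j := by simp [lo, hi, Fin.ext_iff]; omega
  have h4 : lo j ≠ hi j := by simp [lo, hi, Fin.ext_iff]
  unfold sPerm
  rw [h1, Equiv.swap_mul_swap_mul_swap h2 h3, Equiv.swap_comm (lo i) (lo j),
    Equiv.swap_comm (lo j) (hi j), Equiv.swap_mul_swap_mul_swap h4.symm h3.symm,
    Equiv.swap_comm]

theorem ret_rels (n : ℕ) : ∀ r ∈ FRels n, FreeGroup.lift (retGen n) r = 1 := by
  intro r hr
  simp only [FRels, Set.mem_union, Set.mem_iUnion, Set.mem_insert_iff, Set.mem_singleton_iff] at hr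
  rcases hr with (((⟨i, rfl⟩ | ⟨i, rfl⟩) | ⟨i, rfl⟩) | ⟨i, j, h, rfl | rfl | rfl⟩) |
    ⟨i, j, h, rfl | rfl⟩
  · simp [zg, retGen]
  · simp [tg, retGen, sPerm]
  · simp [zg, tg, retGen]
  · simp [zg, retGen]
  · simp [zg, tg, retGen]
  · rw [map_mul, map_inv, mul_inv_eq_one]
    simpa [tg, retGen] using sPerm_far i j h
  · rw [map_mul, map_inv, mul_inv_eq_one]
    simpa [tg, retGen] using sPerm_braid i j h
  · rw [map_mul, map_inv, mul_inv_eq_one]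
    simp [zg, tg, retGen]

/-- the retraction `F_n → S_n` -/
def ret (n : ℕ) : FGrp n →* Equiv.Perm (Fin n) := PresentedGroup.toGroup (ret_rels n)

theorem ret_tF {n : ℕ} (i : Fin (n-1)) : ret n (tF i) = sPerm i :=
  PresentedGroup.toGroup.of (ret_rels n)

theorem rel_eq {n : ℕ} {a b : FreeGroup (GGen n)} (h : a * b⁻¹ ∈ FRels n) :
    PresentedGroup.mk (FRels n) a = PresentedGroup.mk (FRels n) b := by
  have := PresentedGroup.one_of_mem h
  rwa [map_mul, map_inv, mul_inv_eq_one] at this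

/-- `τ_i` indexed by naturals -/
def tN (n : ℕ) (i : ℕ) : FGrp n := if h : i < n - 1 then tF ⟨i, h⟩ else 1

theorem tN_eq {n : ℕ} (i : ℕ) (h : i < n - 1) : tN n i = tF ⟨i, h⟩ := dif_pos h

theorem tN_rel (n : ℕ) : CoxRel (tN n) n where
  sq i h := by
    rw [tN_eq i (by omega)]
    refine PresentedGroup.one_of_mem (rels := FRels n) (x := tg ⟨i, by omega⟩ * tg ⟨i, by omega⟩) ?_
    simp only [FRels, Set.mem_union, Set.mem_iUnion, Set.mem_singleton_iff]
    exact Or.inl (Or.inl (Or.inl (Or.inr ⟨_, rfl⟩)))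
  far i j h hj := by
    rw [tN_eq i (by omega), tN_eq j (by omega)]
    refine rel_eq (a := tg ⟨i, by omega⟩ * tg ⟨j, by omega⟩)
      (b := tg ⟨j, by omega⟩ * tg ⟨i, by omega⟩) ?_
    simp only [FRels, Set.mem_union, Set.mem_iUnion, Set.mem_insert_iff, Set.mem_singleton_iff]
    exact Or.inl (Or.inr ⟨_, _, by simp only [Nat.dist]; omega, Or.inr (Or.inr rfl)⟩)
  br i h := by
    rw [tN_eq i (by omega), tN_eq (i+1) (by omega)]
    refine rel_eq (a := tg ⟨i, by omega⟩ * tg ⟨i+1, by omega⟩ * tg ⟨i, by omega⟩)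
      (b := tg ⟨i+1, by omega⟩ * tg ⟨i, by omega⟩ * tg ⟨i+1, by omega⟩) ?_
    simp only [FRels, Set.mem_union, Set.mem_iUnion, Set.mem_insert_iff, Set.mem_singleton_iff]
    exact Or.inr ⟨⟨i, by omega⟩, ⟨i+1, by omega⟩, rfl, Or.inl rfl⟩

theorem sPerm_closure (n : ℕ) : Subgroup.closure (Set.range (sPerm (n := n))) = ⊤ := by
  rcases n with _ | n
  · exact Subsingleton.elim _ _
  · have h := Equiv.Perm.mclosure_swap_castSucc_succ n
    rw [eq_top_iff]
    intro x _
    have hx : x ∈ Submonoid.closure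
      (Set.range fun i : Fin n => Equiv.swap i.castSucc i.succ) := by rw [h]; trivial
    exact Subgroup.le_closure_toSubmonoid _ hx

/-- the subgroup of `F_n` generated by the virtual generators
`τ_1, …, τ_{n-1}` is isomorphic to the symmetric group `S_n`, via `τ_i ↦ (i, i+1)`. -/
theorem tau_subgroup_iso_symm (n : ℕ) :
    ∃ e : ↥(Subgroup.closure (Set.range fun i : Fin (n-1) => (tF i : FGrp n)))
        ≃* Equiv.Perm (Fin n),
      ∀ i : Fin (n-1),
        e ⟨tF i, Subgroup.subset_closure ⟨i, rfl⟩⟩ = sPerm i := by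
  set K := Subgroup.closure (Set.range fun i : Fin (n-1) => (tF i : FGrp n)) with hK
  have hinj : Function.Injective ((ret n).comp K.subtype) := by
    rw [injective_iff_map_eq_one]
    rintro ⟨w, hw⟩ h1
    have h1' : ret n w = 1 := h1
    have hle : K ≤ coxH (tN n) (n-1) := by
      rw [hK, Subgroup.closure_le]
      rintro _ ⟨i, rfl⟩
      have := mem_coxH (t := tN n) (n-1) i.1 i.2
      rwa [tN_eq i.1 i.2] at this
    apply Subtype.ext
    rcases Nat.eq_zero_or_pos n with h0 | h0
    · have : coxH (tN n) (n-1) = ⊥ := by subst h0; simp [coxH]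
      have h2 := hle hw
      rw [this] at h2
      exact h2
    · refine cox_inj (tN_rel n) (ret n) ?_ (n-1) (by omega) w (hle hw) h1'
      intro i h
      rw [tN_eq i (by omega), ret_tF]
      rfl
  have hsurj : Function.Surjective ((ret n).comp K.subtype) := by
    rw [← MonoidHom.range_eq_top, eq_top_iff, ← sPerm_closure n, Subgroup.closure_le]
    rintro _ ⟨i, rfl⟩
    exact ⟨⟨tF i, Subgroup.subset_closure ⟨i, rfl⟩⟩, ret_tF i⟩
  exact ⟨MulEquiv.ofBijective _ ⟨hinj, hsurj⟩, fun i => ret_tF i⟩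

end OneTermBracket
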